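/- Lemma 8 (trace bound on the dual certificate implies exactness and uniqueness): Let k ∈ {1,2,3} and set ζ₁ = 1, ζ₂ = 1/(n−1) (assuming n ≥ 2 when k = 2), ζ₃ = 1/√n. Let η > 0, let x* be an optimal solution of the penalized problem (P_η), and let Λ* be an m×m real symmetric positive semidefinite matrix such that (x*, Λ*) satisfies the KKT conditions for (P_η). If ‖p‖₂ · tr(Λ*) < ζₖ · η, then (x*, x* x*ᵀ) is an optimal solution of the penalized convex relaxation (R_{η,Cₖ}) and every optimal solution of (R_{η,Cₖ}) equals (x*, x* x*ᵀ). -/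

import Mathlib

/-!
The proof is Lagrangian duality. Write `A = α(Λ)`. Decomposing `Λ = ∑ₖ bₖ bₖᵀ` gives
`A = ∑ₖ M(bₖ)`, hence `‖A‖ ≤ ‖p‖₂ tr Λ < ζ η` (`vecNorm_alphaMat_mulVec_le`).

For a pair `(y, Y)`, stationarity and complementary slackness at `xs` let one complete the square
in the Lagrangian (`relObj_gap`): the objective gap to `(xs, xs xsᵀ)` equals
`⟨η I + A, Y - y yᵀ⟩ + (y - xs)ᵀ (η I + A) (y - xs) - tr (p(y, Y) Λ)`. The last term is
nonnegative by feasibility, the second one dominates a positive multiple of `‖y - xs‖²` because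
`ζ ≤ 1`, and the first one dominates a positive multiple of `tr (Y - y yᵀ)`
(`exists_pairing_bound`). On each of the cones a matrix of trace zero vanishes, so
a zero gap forces `y = xs` and `Y = y yᵀ`.
-/

open Matrix

noncomputable section

/-- Euclidean (ℓ₂) norm of a finite real vector. -/
def vecNorm {k : ℕ} (u : Fin k → ℝ) : ℝ := Real.sqrt (∑ i, u i ^ 2)

/-- The matrix pencil `p(x, X) = F₀ + ∑ₖ xₖ Kₖ + ∑ᵢ ∑ⱼ Xᵢⱼ Lᵢⱼ`. -/
def pencil {n m : ℕ} (F0 : Matrix (Fin m) (Fin m) ℝ)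
    (K : Fin n → Matrix (Fin m) (Fin m) ℝ)
    (L : Fin n → Fin n → Matrix (Fin m) (Fin m) ℝ)
    (x : Fin n → ℝ) (X : Matrix (Fin n) (Fin n) ℝ) : Matrix (Fin m) (Fin m) ℝ :=
  F0 + ∑ k, x k • K k + ∑ i, ∑ j, X i j • L i j

/-- Negative semidefinite real matrix. -/
def NegSemidef' {k : ℕ} (A : Matrix (Fin k) (Fin k) ℝ) : Prop := (-A).PosSemidef

/-- Negative definite real matrix. -/
def NegDef' {k : ℕ} (A : Matrix (Fin k) (Fin k) ℝ) : Prop := (-A).PosDef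

/-- The BMI feasible set `F = {x : p(x, xxᵀ) ⪯ 0}`. -/
def feasSet {n m : ℕ} (F0 : Matrix (Fin m) (Fin m) ℝ)
    (K : Fin n → Matrix (Fin m) (Fin m) ℝ)
    (L : Fin n → Fin n → Matrix (Fin m) (Fin m) ℝ) : Set (Fin n → ℝ) :=
  {x | NegSemidef' (pencil F0 K L x (vecMulVec x x))}

/-- Feasibility distance `d_F(x) = inf {‖x − a‖₂ : a ∈ F}`. -/
def distF {n m : ℕ} (F0 : Matrix (Fin m) (Fin m) ℝ)
    (K : Fin n → Matrix (Fin m) (Fin m) ℝ)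
    (L : Fin n → Fin n → Matrix (Fin m) (Fin m) ℝ) (x : Fin n → ℝ) : ℝ :=
  sInf {r | ∃ a ∈ feasSet F0 K L, r = vecNorm (x - a)}

/-- `δₖ(x) = 2 ∑ᵢ xᵢ L_{k i}`. -/
def deltaMat {n m : ℕ} (L : Fin n → Fin n → Matrix (Fin m) (Fin m) ℝ)
    (k : Fin n) (x : Fin n → ℝ) : Matrix (Fin m) (Fin m) ℝ :=
  (2 : ℝ) • ∑ i, x i • L k i

/-- The MFCQ condition at a point `x`. -/
def MFCQ {n m : ℕ} (F0 : Matrix (Fin m) (Fin m) ℝ)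
    (K : Fin n → Matrix (Fin m) (Fin m) ℝ)
    (L : Fin n → Fin n → Matrix (Fin m) (Fin m) ℝ) (x : Fin n → ℝ) : Prop :=
  ∃ b : Fin n → ℝ,
    NegDef' (pencil F0 K L x (vecMulVec x x) + ∑ k, b k • (K k + deltaMat L k x))

/-- Smallest eigenvalue of a symmetric real matrix, via the Rayleigh quotient. -/
def lambdaMin {k : ℕ} (A : Matrix (Fin k) (Fin k) ℝ) : ℝ :=
  sInf {r | ∃ u : Fin k → ℝ, vecNorm u = 1 ∧ r = u ⬝ᵥ (A *ᵥ u)}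

/-- The G-MFCQ function `s(x)`. -/
def sFun {n m : ℕ} (K : Fin n → Matrix (Fin m) (Fin m) ℝ)
    (L : Fin n → Fin n → Matrix (Fin m) (Fin m) ℝ) (x : Fin n → ℝ) : ℝ :=
  sSup {r | ∃ b : Fin n → ℝ, vecNorm b = 1 ∧
    r = lambdaMin (-(∑ k, b k • (K k + deltaMat L k x)))}

/-- Spectral norm of a real matrix. -/
def specNorm {k : ℕ} (A : Matrix (Fin k) (Fin k) ℝ) : ℝ :=
  sSup {r | ∃ v : Fin k → ℝ, vecNorm v = 1 ∧ r = vecNorm (A *ᵥ v)}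

/-- Pencil norm `‖p‖₂`. -/
def pencilNorm {n m : ℕ} (L : Fin n → Fin n → Matrix (Fin m) (Fin m) ℝ) : ℝ :=
  sSup {r | ∃ u : Fin m → ℝ, vecNorm u = 1 ∧
    r = specNorm (Matrix.of fun i j => u ⬝ᵥ (L i j *ᵥ u))}

/-- Cone `C₁`: positive semidefinite matrices. -/
def coneC1 (n : ℕ) : Set (Matrix (Fin n) (Fin n) ℝ) := {H | H.PosSemidef}

/-- Cone `C₂`: symmetric matrices with `Hᵢᵢ ≥ 0` and `Hᵢᵢ Hⱼⱼ ≥ Hᵢⱼ²`. -/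
def coneC2 (n : ℕ) : Set (Matrix (Fin n) (Fin n) ℝ) :=
  {H | H.IsSymm ∧ ∀ i j, 0 ≤ H i i ∧ H i j ^ 2 ≤ H i i * H j j}

/-- Cone `C₃`: symmetric matrices with `Hᵢᵢ ≥ 0` and `Hᵢᵢ + Hⱼⱼ ≥ 2|Hᵢⱼ|`. -/
def coneC3 (n : ℕ) : Set (Matrix (Fin n) (Fin n) ℝ) :=
  {H | H.IsSymm ∧ ∀ i j, 0 ≤ H i i ∧ 2 * |H i j| ≤ H i i + H j j}

/-- Dual cone with respect to the trace inner product. -/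
def dualCone {n : ℕ} (C : Set (Matrix (Fin n) (Fin n) ℝ)) :
    Set (Matrix (Fin n) (Fin n) ℝ) :=
  {Y | Y.IsSymm ∧ ∀ H ∈ C, 0 ≤ (Y * H).trace}

/-- `α(Λ)` : the n×n matrix with entries `⟨Lᵢⱼ, Λ⟩ = tr(Lᵢⱼ Λ)`. -/
def alphaMat {n m : ℕ} (L : Fin n → Fin n → Matrix (Fin m) (Fin m) ℝ)
    (Λ : Matrix (Fin m) (Fin m) ℝ) : Matrix (Fin n) (Fin n) ℝ :=
  Matrix.of fun i j => (L i j * Λ).trace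

/-- Objective of the penalized problem `(P_η)`. -/
def penObj {n : ℕ} (c xc : Fin n → ℝ) (η : ℝ) (x : Fin n → ℝ) : ℝ :=
  c ⬝ᵥ x + η * vecNorm (x - xc) ^ 2

/-- `x` is an optimal solution of the penalized problem `(P_η)`. -/
def IsOptPen {n m : ℕ} (F0 : Matrix (Fin m) (Fin m) ℝ)
    (K : Fin n → Matrix (Fin m) (Fin m) ℝ)
    (L : Fin n → Fin n → Matrix (Fin m) (Fin m) ℝ)
    (c xc : Fin n → ℝ) (η : ℝ) (x : Fin n → ℝ) : Prop :=
  x ∈ feasSet F0 K L ∧ ∀ y ∈ feasSet F0 K L, penObj c xc η x ≤ penObj c xc η y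

/-- Objective of the penalized convex relaxation `(R_{η,C})`. -/
def relObj {n : ℕ} (c xc : Fin n → ℝ) (η : ℝ) (x : Fin n → ℝ)
    (X : Matrix (Fin n) (Fin n) ℝ) : ℝ :=
  c ⬝ᵥ x + η * (X.trace - 2 * (xc ⬝ᵥ x) + xc ⬝ᵥ xc)

/-- Feasibility for the relaxation with cone `C`. -/
def RelFeasible {n m : ℕ} (F0 : Matrix (Fin m) (Fin m) ℝ)
    (K : Fin n → Matrix (Fin m) (Fin m) ℝ)
    (L : Fin n → Fin n → Matrix (Fin m) (Fin m) ℝ)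
    (C : Set (Matrix (Fin n) (Fin n) ℝ))
    (x : Fin n → ℝ) (X : Matrix (Fin n) (Fin n) ℝ) : Prop :=
  X.IsSymm ∧ NegSemidef' (pencil F0 K L x X) ∧ X - vecMulVec x x ∈ C

/-- `(x, X)` is an optimal solution of the penalized convex relaxation `(R_{η,C})`. -/
def IsOptRel {n m : ℕ} (F0 : Matrix (Fin m) (Fin m) ℝ)
    (K : Fin n → Matrix (Fin m) (Fin m) ℝ)
    (L : Fin n → Fin n → Matrix (Fin m) (Fin m) ℝ)
    (c xc : Fin n → ℝ) (η : ℝ) (C : Set (Matrix (Fin n) (Fin n) ℝ))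
    (x : Fin n → ℝ) (X : Matrix (Fin n) (Fin n) ℝ) : Prop :=
  RelFeasible F0 K L C x X ∧
    ∀ y Y, RelFeasible F0 K L C y Y → relObj c xc η x X ≤ relObj c xc η y Y

/-- The KKT conditions for `(P_η)` at `(x, Λ)`. -/
def KKT {n m : ℕ} (F0 : Matrix (Fin m) (Fin m) ℝ)
    (K : Fin n → Matrix (Fin m) (Fin m) ℝ)
    (L : Fin n → Fin n → Matrix (Fin m) (Fin m) ℝ)
    (c xc : Fin n → ℝ) (η : ℝ)
    (x : Fin n → ℝ) (Λ : Matrix (Fin m) (Fin m) ℝ) : Prop :=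
  Λ.IsSymm ∧ Λ.PosSemidef ∧
  c + (2 * η) • (x - xc) + (∑ k, ((K k * Λ).trace) • (Pi.single k 1 : Fin n → ℝ))
      + (2 : ℝ) • (alphaMat L Λ *ᵥ x) = 0 ∧
  Λ * pencil F0 K L x (vecMulVec x x) = 0

/-! ### Euclidean norm -/

lemma vecNorm_nonneg {k : ℕ} (u : Fin k → ℝ) : 0 ≤ vecNorm u := Real.sqrt_nonneg _

lemma vecNorm_sq {k : ℕ} (u : Fin k → ℝ) : vecNorm u ^ 2 = ∑ i, u i ^ 2 :=
  Real.sq_sqrt (Finset.sum_nonneg fun i _ => sq_nonneg (u i))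

lemma vecNorm_eq_norm {k : ℕ} (u : Fin k → ℝ) : vecNorm u = ‖WithLp.toLp 2 u‖ := by
  simp [vecNorm, EuclideanSpace.norm_eq]

lemma vecNorm_smul {k : ℕ} (a : ℝ) (u : Fin k → ℝ) :
    vecNorm (a • u) = |a| * vecNorm u := by
  simp [vecNorm_eq_norm, norm_smul]

lemma vecNorm_sum_le {k : ℕ} {ι : Type*} (s : Finset ι) (f : ι → Fin k → ℝ) :
    vecNorm (∑ i ∈ s, f i) ≤ ∑ i ∈ s, vecNorm (f i) := by
  simp only [vecNorm_eq_norm, WithLp.toLp_sum]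
  exact norm_sum_le _ _

lemma vecNorm_eq_zero {k : ℕ} {u : Fin k → ℝ} (h : vecNorm u = 0) : u = 0 := by
  rw [vecNorm_eq_norm, norm_eq_zero] at h
  simpa using h

lemma abs_le_vecNorm {k : ℕ} (u : Fin k → ℝ) (i : Fin k) : |u i| ≤ vecNorm u := by
  apply Real.abs_le_sqrt
  exact Finset.single_le_sum (f := fun i => u i ^ 2) (fun i _ => sq_nonneg (u i))
    (Finset.mem_univ i)

lemma vecNorm_le_sum_abs {k : ℕ} (u : Fin k → ℝ) : vecNorm u ≤ ∑ i, |u i| := by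
  apply Real.sqrt_le_iff.2
  refine ⟨Finset.sum_nonneg fun i _ => abs_nonneg _, ?_⟩
  have := Finset.sum_sq_le_sq_sum_of_nonneg (s := Finset.univ) (f := fun i => |u i|)
    (fun i _ => abs_nonneg _)
  simpa using this

lemma sum_abs_le_sqrt_mul {k : ℕ} (u : Fin k → ℝ) :
    ∑ i, |u i| ≤ Real.sqrt k * vecNorm u := by
  have := Real.sum_mul_le_sqrt_mul_sqrt Finset.univ (fun _ : Fin k => (1 : ℝ)) (fun i => |u i|)
  simpa [vecNorm] using this

lemma abs_dotProduct_le {k : ℕ} (u v : Fin k → ℝ) : |u ⬝ᵥ v| ≤ vecNorm u * vecNorm v := by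
  have h1 := Real.sum_mul_le_sqrt_mul_sqrt Finset.univ u v
  have h2 := Real.sum_mul_le_sqrt_mul_sqrt Finset.univ (fun i => - u i) v
  simp only [neg_mul, Finset.sum_neg_distrib, neg_sq] at h2
  rw [abs_le]
  simp only [dotProduct, vecNorm]
  constructor <;> linarith

/-! ### Spectral norm and pencil norm -/

/-- The entrywise `ℓ₁` norm bounds the action on unit vectors; hence the sets of reals whose
suprema define `specNorm` and `pencilNorm` are bounded above. -/
lemma vecNorm_mulVec_le {k : ℕ} (A : Matrix (Fin k) (Fin k) ℝ) {v : Fin k → ℝ}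
    (hv : vecNorm v = 1) : vecNorm (A *ᵥ v) ≤ ∑ i, ∑ j, |A i j| := by
  refine (vecNorm_le_sum_abs _).trans (Finset.sum_le_sum fun i _ => ?_)
  rw [Matrix.mulVec, dotProduct]
  refine (Finset.abs_sum_le_sum_abs _ _).trans (Finset.sum_le_sum fun j _ => ?_)
  have := abs_le_vecNorm v j
  rw [hv] at this
  rw [abs_mul]
  exact mul_le_of_le_one_right (abs_nonneg _) this

lemma specNorm_le_sum {k : ℕ} (A : Matrix (Fin k) (Fin k) ℝ) :
    specNorm A ≤ ∑ i, ∑ j, |A i j| := by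
  apply Real.sSup_le
  · rintro r ⟨v, hv, rfl⟩
    exact vecNorm_mulVec_le A hv
  · positivity

lemma vecNorm_mulVec_le_specNorm {k : ℕ} (A : Matrix (Fin k) (Fin k) ℝ) {v : Fin k → ℝ}
    (hv : vecNorm v = 1) : vecNorm (A *ᵥ v) ≤ specNorm A := by
  apply le_csSup
  · refine ⟨∑ i, ∑ j, |A i j|, ?_⟩
    rintro r ⟨w, hw, rfl⟩
    exact vecNorm_mulVec_le A hw
  · exact ⟨v, hv, rfl⟩

/-- The matrix `M(u)` with entries `uᵀ Lᵢⱼ u`. -/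
def quadMat {n m : ℕ} (L : Fin n → Fin n → Matrix (Fin m) (Fin m) ℝ) (u : Fin m → ℝ) :
    Matrix (Fin n) (Fin n) ℝ :=
  Matrix.of fun i j => u ⬝ᵥ (L i j *ᵥ u)

lemma specNorm_quadMat_le {n m : ℕ} (L : Fin n → Fin n → Matrix (Fin m) (Fin m) ℝ)
    {u : Fin m → ℝ} (hu : vecNorm u = 1) : specNorm (quadMat L u) ≤ pencilNorm L := by
  apply le_csSup
  · refine ⟨∑ i, ∑ j, ∑ a, ∑ b, |L i j a b|, ?_⟩
    rintro r ⟨w, hw, rfl⟩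
    refine (specNorm_le_sum _).trans
      (Finset.sum_le_sum fun i _ => Finset.sum_le_sum fun j _ => ?_)
    simp only [Matrix.of_apply]
    refine (abs_dotProduct_le _ _).trans ?_
    rw [hw, one_mul]
    exact vecNorm_mulVec_le _ hw
  · exact ⟨u, hu, rfl⟩

lemma quadMat_smul {n m : ℕ} (L : Fin n → Fin n → Matrix (Fin m) (Fin m) ℝ)
    (a : ℝ) (u : Fin m → ℝ) : quadMat L (a • u) = a ^ 2 • quadMat L u := by
  ext i j
  simp [quadMat, Matrix.mulVec_smul]
  ring

lemma exists_normalize {k : ℕ} {u : Fin k → ℝ} (hu : u ≠ 0) :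
    ∃ w, vecNorm w = 1 ∧ u = vecNorm u • w := by
  have h : vecNorm u ≠ 0 := fun h => hu (vecNorm_eq_zero h)
  refine ⟨(vecNorm u)⁻¹ • u, ?_, ?_⟩
  · rw [vecNorm_smul, abs_of_nonneg (inv_nonneg.2 (vecNorm_nonneg u)), inv_mul_cancel₀ h]
  · rw [smul_smul, mul_inv_cancel₀ h, one_smul]

lemma vecNorm_zero {k : ℕ} : vecNorm (0 : Fin k → ℝ) = 0 := by simp [vecNorm]

/-- Homogeneous form of the pencil-norm bound, obtained by scaling to unit vectors. -/
lemma vecNorm_quadMat_mulVec_le {n m : ℕ} (L : Fin n → Fin n → Matrix (Fin m) (Fin m) ℝ)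
    (u : Fin m → ℝ) (v : Fin n → ℝ) :
    vecNorm (quadMat L u *ᵥ v) ≤ pencilNorm L * vecNorm u ^ 2 * vecNorm v := by
  by_cases hu : u = 0
  · have h0 : quadMat L u = 0 := by ext i j; simp [quadMat, hu]
    rw [h0, Matrix.zero_mulVec, vecNorm_zero, hu, vecNorm_zero]
    simp
  by_cases hv : v = 0
  · simp [hv, vecNorm_zero]
  obtain ⟨u', hu1, hu2⟩ := exists_normalize hu
  obtain ⟨v', hv1, hv2⟩ := exists_normalize hv
  have h := (vecNorm_mulVec_le_specNorm (quadMat L u') hv1).trans (specNorm_quadMat_le L hu1)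
  have e : quadMat L u *ᵥ v = (vecNorm u ^ 2 * vecNorm v) • (quadMat L u' *ᵥ v') := by
    conv_lhs => rw [hu2, hv2]
    rw [quadMat_smul, Matrix.mulVec_smul, Matrix.smul_mulVec, smul_smul, mul_comm]
  have hp : 0 ≤ vecNorm u ^ 2 * vecNorm v := mul_nonneg (sq_nonneg _) (vecNorm_nonneg v)
  rw [e, vecNorm_smul, abs_of_nonneg hp]
  calc _ ≤ (vecNorm u ^ 2 * vecNorm v) * pencilNorm L := mul_le_mul_of_nonneg_left h hp
    _ = _ := by ring

/-! ### Rank-one decompositions and the bound on `α(Λ)` -/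

open scoped MatrixOrder in
/-- A positive semidefinite matrix is a sum of rank-one matrices `∑ₖ bₖ bₖᵀ`. -/
lemma exists_rankOne_sum {k : ℕ} {H : Matrix (Fin k) (Fin k) ℝ} (hH : H.PosSemidef) :
    ∃ b : Fin k → Fin k → ℝ, ∀ i j, H i j = ∑ l, b l i * b l j := by
  obtain ⟨B, hB⟩ := CStarAlgebra.nonneg_iff_eq_star_mul_self.1 hH.nonneg
  refine ⟨B, fun i j => ?_⟩
  rw [hB]
  simp [Matrix.mul_apply, Matrix.star_apply]

lemma trace_rankOne_sum {k : ℕ} {H : Matrix (Fin k) (Fin k) ℝ} {b : Fin k → Fin k → ℝ}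
    (hb : ∀ i j, H i j = ∑ l, b l i * b l j) : H.trace = ∑ l, vecNorm (b l) ^ 2 := by
  simp only [Matrix.trace, Matrix.diag, hb, vecNorm_sq]
  rw [Finset.sum_comm]
  simp only [sq]

lemma pairing_rankOne_sum {k : ℕ} {H : Matrix (Fin k) (Fin k) ℝ} {b : Fin k → Fin k → ℝ}
    (hb : ∀ i j, H i j = ∑ l, b l i * b l j) (A : Matrix (Fin k) (Fin k) ℝ) :
    ∑ i, ∑ j, H i j * A i j = ∑ l, b l ⬝ᵥ (A *ᵥ b l) := by
  simp only [hb, dotProduct, Matrix.mulVec, Finset.mul_sum, Finset.sum_mul]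
  rw [eq_comm, Finset.sum_comm]
  refine Finset.sum_congr rfl fun i _ => ?_
  rw [Finset.sum_comm]
  refine Finset.sum_congr rfl fun j _ => Finset.sum_congr rfl fun l _ => ?_
  ring

/-- Decomposing `Λ = ∑ₖ bₖ bₖᵀ` gives `α(Λ) = ∑ₖ M(bₖ)` and `tr Λ = ∑ₖ ‖bₖ‖²`, whence
`‖α(Λ)‖ ≤ ‖p‖₂ tr Λ`. -/
lemma vecNorm_alphaMat_mulVec_le {n m : ℕ} (L : Fin n → Fin n → Matrix (Fin m) (Fin m) ℝ)
    {Λ : Matrix (Fin m) (Fin m) ℝ} (hΛ : Λ.PosSemidef) (v : Fin n → ℝ) :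
    vecNorm (alphaMat L Λ *ᵥ v) ≤ pencilNorm L * Λ.trace * vecNorm v := by
  obtain ⟨b, hb⟩ := exists_rankOne_sum hΛ
  have hsymm : ∀ i j, Λ i j = Λ j i := fun i j => by
    simp only [hb]
    exact Finset.sum_congr rfl fun l _ => mul_comm _ _
  have e : alphaMat L Λ = ∑ l, quadMat L (b l) := by
    ext i j
    simp only [alphaMat, quadMat, Matrix.of_apply, Matrix.sum_apply]
    rw [← pairing_rankOne_sum hb]
    simp only [Matrix.trace, Matrix.diag, Matrix.mul_apply]
    refine Finset.sum_congr rfl fun a _ => Finset.sum_congr rfl fun c _ => ?_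
    rw [mul_comm, hsymm]
  rw [e, Matrix.sum_mulVec, trace_rankOne_sum hb, Finset.mul_sum, Finset.sum_mul]
  exact (vecNorm_sum_le _ _).trans
    (Finset.sum_le_sum fun l _ => vecNorm_quadMat_mulVec_le L (b l) v)

/-! ### Pairings with the cones -/

lemma quadForm_ge {n : ℕ} {A : Matrix (Fin n) (Fin n) ℝ} {τ : ℝ}
    (hA : ∀ v, vecNorm (A *ᵥ v) ≤ τ * vecNorm v) (v : Fin n → ℝ) :
    -(τ * vecNorm v ^ 2) ≤ v ⬝ᵥ (A *ᵥ v) := by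
  have h1 := (abs_le.1 (abs_dotProduct_le v (A *ᵥ v))).1
  have h2 := mul_le_mul_of_nonneg_left (hA v) (vecNorm_nonneg v)
  nlinarith

lemma pairing_ge_of_posSemidef {n : ℕ} {A H : Matrix (Fin n) (Fin n) ℝ} {τ : ℝ}
    (hA : ∀ v, vecNorm (A *ᵥ v) ≤ τ * vecNorm v) (hH : H.PosSemidef) :
    -(τ * H.trace) ≤ ∑ i, ∑ j, H i j * A i j := by
  obtain ⟨b, hb⟩ := exists_rankOne_sum hH
  rw [pairing_rankOne_sum hb, trace_rankOne_sum hb, Finset.mul_sum, ← Finset.sum_neg_distrib]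
  exact Finset.sum_le_sum fun l _ => quadForm_ge hA (b l)

/-- On `C₃` the off-diagonal entries are averaged diagonal ones, so the pairing is controlled by
the `ℓ₁` norms of the columns of `A`, each at most `√n` times its Euclidean norm. -/
lemma pairing_ge_of_coneC3 {n : ℕ} {A H : Matrix (Fin n) (Fin n) ℝ} {τ : ℝ}
    (hA : ∀ v, vecNorm (A *ᵥ v) ≤ τ * vecNorm v) (hsymm : ∀ i j, A i j = A j i)
    (hH : H ∈ coneC3 n) :
    -(Real.sqrt n * τ * H.trace) ≤ ∑ i, ∑ j, H i j * A i j := by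
  have hcol : ∀ j, ∑ i, |A i j| ≤ Real.sqrt n * τ := by
    intro j
    have h1 := hA (Pi.single j 1)
    have h2 : vecNorm (Pi.single j 1 : Fin n → ℝ) = 1 := by
      simp [vecNorm_eq_norm]
    have h3 : A *ᵥ (Pi.single j 1) = fun i => A i j := by
      ext i; simp
    rw [h2, h3, mul_one] at h1
    exact (sum_abs_le_sqrt_mul fun i => A i j).trans
      (mul_le_mul_of_nonneg_left h1 (Real.sqrt_nonneg _))
  have hS : ∑ i, ∑ j, |A i j| * H j j ≤ Real.sqrt n * τ * H.trace := by
    rw [Finset.sum_comm, Matrix.trace, Finset.mul_sum]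
    refine Finset.sum_le_sum fun j _ => ?_
    rw [← Finset.sum_mul]
    exact mul_le_mul_of_nonneg_right (hcol j) (hH.2 j j).1
  have hS' : ∑ i, ∑ j, |A i j| * H i i = ∑ i, ∑ j, |A i j| * H j j := by
    rw [Finset.sum_comm]
    refine Finset.sum_congr rfl fun i _ => Finset.sum_congr rfl fun j _ => ?_
    rw [hsymm]
  have hE : ∑ i, ∑ j, -(|A i j| * H i i + |A i j| * H j j) / 2
      ≤ ∑ i, ∑ j, H i j * A i j := by
    refine Finset.sum_le_sum fun i _ => Finset.sum_le_sum fun j _ => ?_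
    have h1 := neg_abs_le (H i j * A i j)
    rw [abs_mul] at h1
    have h2 := mul_le_mul_of_nonneg_left (hH.2 i j).2 (abs_nonneg (A i j))
    linarith
  have hE' : ∑ i, ∑ j, -(|A i j| * H i i + |A i j| * H j j) / 2
      = -(∑ i, ∑ j, |A i j| * H i i + ∑ i, ∑ j, |A i j| * H j j) / 2 := by
    simp only [← Finset.sum_div, Finset.sum_neg_distrib, Finset.sum_add_distrib]
  linarith

lemma coneC1_subset_coneC2 (n : ℕ) : coneC1 n ⊆ coneC2 n := by
  intro H hH
  obtain ⟨b, hb⟩ := exists_rankOne_sum hH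
  refine ⟨?_, fun i j => ⟨?_, ?_⟩⟩
  · ext i j
    simp [hb, mul_comm]
  · rw [hb]
    exact Finset.sum_nonneg fun l _ => mul_self_nonneg _
  · simp only [hb, ← sq]
    exact Finset.sum_mul_sq_le_sq_mul_sq _ _ _

lemma coneC2_subset_coneC3 (n : ℕ) : coneC2 n ⊆ coneC3 n := by
  rintro H ⟨hs, h⟩
  refine ⟨hs, fun i j => ⟨(h i j).1, ?_⟩⟩
  have h1 := (h i j).1
  have h2 := (h j i).1
  have h3 := (h i j).2
  rw [← sq_abs] at h3
  apply abs_le_of_sq_le_sq' _ (by linarith) |>.2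
  nlinarith [sq_nonneg (H i i - H j j)]

lemma coneC2_two_posSemidef {H : Matrix (Fin 2) (Fin 2) ℝ} (hH : H ∈ coneC2 2) :
    H.PosSemidef := by
  obtain ⟨hs, h⟩ := hH
  have h10 : H 1 0 = H 0 1 := hs.apply 0 1
  have h0 := (h 0 1).1
  have h1 := (h 1 0).1
  have hd := (h 0 1).2
  refine Matrix.PosSemidef.of_dotProduct_mulVec_nonneg ?_ fun v => ?_
  · ext i j; simp [hs.apply]
  · simp only [star_trivial, dotProduct, Matrix.mulVec, Fin.sum_univ_two, h10]
    have habs : |H 0 1| ≤ Real.sqrt (H 0 0) * Real.sqrt (H 1 1) := by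
      rw [← Real.sqrt_mul h0]; exact Real.abs_le_sqrt hd
    have e0 := Real.sq_sqrt h0
    have e1 := Real.sq_sqrt h1
    have hx : -(|v 0 * v 1| * (Real.sqrt (H 0 0) * Real.sqrt (H 1 1))) ≤ v 0 * v 1 * H 0 1 := by
      have := neg_abs_le (v 0 * v 1 * H 0 1)
      rw [abs_mul] at this
      have := mul_le_mul_of_nonneg_left habs (abs_nonneg (v 0 * v 1))
      linarith
    have hsq := sq_nonneg (Real.sqrt (H 0 0) * |v 0| - Real.sqrt (H 1 1) * |v 1|)
    rw [sub_sq, mul_pow, mul_pow, e0, e1, sq_abs, sq_abs] at hsq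
    rw [abs_mul] at hx
    linarith

lemma eq_zero_of_coneC3 {n : ℕ} {H : Matrix (Fin n) (Fin n) ℝ} (hH : H ∈ coneC3 n)
    (h0 : H.trace ≤ 0) : H = 0 := by
  have hd : ∀ i, H i i ≤ 0 := fun i =>
    (Finset.single_le_sum (f := fun i => H i i) (fun i _ => (hH.2 i i).1)
      (Finset.mem_univ i)).trans h0
  ext i j
  have h1 := (hH.2 i j).2
  have h2 := hd i
  have h3 := hd j
  exact abs_nonpos_iff.1 (by linarith)

lemma trace_nonneg_of_coneC3 {n : ℕ} {H : Matrix (Fin n) (Fin n) ℝ} (hH : H ∈ coneC3 n) :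
    0 ≤ H.trace := Finset.sum_nonneg fun i _ => (hH.2 i i).1

/-- The dual certificate: if `‖A‖ ≤ τ < ζₖ η`, then `η I + A` is strictly positive on `Cₖ ∖ {0}`,
quantified by a constant `σ < η`. The inclusion in the largest cone `C₃`, and `τ < η` from
`ζₖ ≤ 1`, are recorded uniformly in `k`. For `k = 2` the inclusion `C₂ ⊆ C₃` suffices when `n ≥ 3`,
since then `1 / (n - 1) ≤ 1 / √n`, while for `n = 2` the cones `C₂` and `C₁` agree. -/
lemma exists_pairing_bound {n : ℕ} (hn : 0 < n) {k : Fin 3} (hn2 : k = 1 → 2 ≤ n) {ζ : ℝ}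
    (hζ : ζ = if k = 0 then 1 else if k = 1 then 1/((n : ℝ) - 1)
          else 1/Real.sqrt (n : ℝ))
    {C : Set (Matrix (Fin n) (Fin n) ℝ)}
    (hC : C = if k = 0 then coneC1 n else if k = 1 then coneC2 n else coneC3 n)
    {η : ℝ} (hη : 0 < η) {A : Matrix (Fin n) (Fin n) ℝ} {τ : ℝ}
    (hA : ∀ v, vecNorm (A *ᵥ v) ≤ τ * vecNorm v) (hsymm : ∀ i j, A i j = A j i)
    (hτ : τ < ζ * η) :
    τ < η ∧ C ⊆ coneC3 n ∧ (0 : Matrix (Fin n) (Fin n) ℝ) ∈ C ∧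
      ∃ σ < η, ∀ H ∈ C, -(σ * H.trace) ≤ ∑ i, ∑ j, H i j * A i j := by
  have hn1 : (1 : ℝ) ≤ n := by exact_mod_cast hn
  have hs1 : 1 ≤ Real.sqrt n := Real.one_le_sqrt.2 hn1
  have h12 := coneC1_subset_coneC2 n
  have h23 := coneC2_subset_coneC3 n
  have h0 : (0 : Matrix (Fin n) (Fin n) ℝ) ∈ coneC1 n := Matrix.PosSemidef.zero
  -- A bound against `1 / √n` settles every subset of `C₃`.
  have key : τ < 1 / Real.sqrt n * η →
      Real.sqrt n * τ < η := by
    intro h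
    have := mul_lt_mul_of_pos_left h (lt_of_lt_of_le one_pos hs1)
    have e : Real.sqrt n * (1 / Real.sqrt n * η) = η := by field_simp
    linarith
  fin_cases k
  · simp at hζ hC
    subst hζ hC
    rw [one_mul] at hτ
    exact ⟨hτ, h12.trans h23, h0, τ, hτ, fun H hH => pairing_ge_of_posSemidef hA hH⟩
  · simp at hζ hC hn2
    subst hζ hC
    have hn2' : (2 : ℝ) ≤ n := by exact_mod_cast hn2
    have hle : ((n : ℝ) - 1)⁻¹ ≤ 1 := inv_le_one_of_one_le₀ (by linarith)
    have hτ1 : τ < η := by nlinarith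
    refine ⟨hτ1, h23, h12 h0, ?_⟩
    rcases hn2.eq_or_lt with h | h
    · subst h
      exact ⟨τ, hτ1, fun H hH => pairing_ge_of_posSemidef hA (coneC2_two_posSemidef hH)⟩
    · have hn3 : (3 : ℝ) ≤ n := by exact_mod_cast h
      have hsq : Real.sqrt n ≤ n - 1 := Real.sqrt_le_iff.2 ⟨by linarith, by nlinarith⟩
      have h4 : ((n : ℝ) - 1)⁻¹ ≤ 1 / Real.sqrt n := by
        rw [one_div]; exact inv_anti₀ (by linarith) hsq
      exact ⟨_, key (hτ.trans_le (mul_le_mul_of_nonneg_right h4 hη.le)),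
        fun H hH => pairing_ge_of_coneC3 hA hsymm (h23 hH)⟩
  · simp at hζ hC
    subst hζ hC
    have hle : (Real.sqrt n)⁻¹ ≤ 1 := inv_le_one_of_one_le₀ hs1
    exact ⟨by nlinarith, subset_rfl, h23 (h12 h0), _, key (by simpa using hτ),
      fun H hH => pairing_ge_of_coneC3 hA hsymm hH⟩

/-! ### The Lagrangian identity -/

lemma trace_pencil_mul {n m : ℕ} (F0 : Matrix (Fin m) (Fin m) ℝ)
    (K : Fin n → Matrix (Fin m) (Fin m) ℝ)
    (L : Fin n → Fin n → Matrix (Fin m) (Fin m) ℝ) (Λ : Matrix (Fin m) (Fin m) ℝ)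
    (x : Fin n → ℝ) (X : Matrix (Fin n) (Fin n) ℝ) :
    (pencil F0 K L x X * Λ).trace = (F0 * Λ).trace + ∑ k, x k * (K k * Λ).trace
      + ∑ i, ∑ j, X i j * alphaMat L Λ i j := by
  simp [pencil, alphaMat, Matrix.add_mul, Matrix.sum_mul, Matrix.trace_sum]

lemma trace_mul_nonneg {m : ℕ} {P Λ : Matrix (Fin m) (Fin m) ℝ} (hP : P.PosSemidef)
    (hΛ : Λ.PosSemidef) : 0 ≤ (P * Λ).trace := by
  obtain ⟨b, hb⟩ := exists_rankOne_sum hP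
  have h := pairing_rankOne_sum hb Λᵀ
  have e : (P * Λ).trace = ∑ i, ∑ j, P i j * Λᵀ i j := by
    simp [Matrix.trace, Matrix.mul_apply]
  rw [e, h]
  refine Finset.sum_nonneg fun l _ => ?_
  have := hΛ.transpose.dotProduct_mulVec_nonneg (b l)
  simpa using this

/-- Completing the square in the Lagrangian: by stationarity and complementary slackness at `xs`,
the objective gap of a pair `(y, Y)` is a sum of `⟨η I + A, Y - y yᵀ⟩`, the quadratic form of
`η I + A` at `y - xs`, and the slack `-tr (p(y, Y) Λ)`. -/
lemma relObj_gap {n m : ℕ} {F0 : Matrix (Fin m) (Fin m) ℝ}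
    {K : Fin n → Matrix (Fin m) (Fin m) ℝ}
    {L : Fin n → Fin n → Matrix (Fin m) (Fin m) ℝ} (hLsy : ∀ i j, L i j = L j i)
    {c xc : Fin n → ℝ} {η : ℝ} {xs : Fin n → ℝ} {Λ : Matrix (Fin m) (Fin m) ℝ}
    (hKKT : KKT F0 K L c xc η xs Λ) (y : Fin n → ℝ) (Y : Matrix (Fin n) (Fin n) ℝ) :
    relObj c xc η y Y - relObj c xc η xs (vecMulVec xs xs) =
      (η * (Y - vecMulVec y y).trace
        + ∑ i, ∑ j, (Y - vecMulVec y y) i j * alphaMat L Λ i j)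
      + (η * vecNorm (y - xs) ^ 2 + (y - xs) ⬝ᵥ (alphaMat L Λ *ᵥ (y - xs)))
      - (pencil F0 K L y Y * Λ).trace := by
  obtain ⟨-, -, hgrad, hcs⟩ := hKKT
  have hcs' : (pencil F0 K L xs (vecMulVec xs xs) * Λ).trace = 0 := by
    rw [Matrix.trace_mul_comm, hcs, Matrix.trace_zero]
  rw [trace_pencil_mul] at hcs' ⊢
  have hsymm : ∀ i j, alphaMat L Λ i j = alphaMat L Λ j i := fun i j => by
    simp [alphaMat, hLsy i j]
  generalize alphaMat L Λ = A at *
  generalize (F0 * Λ).trace = t at *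
  have hg : ∀ i, c i + 2 * η * (xs i - xc i) + (K i * Λ).trace + 2 * ∑ j, A i j * xs j = 0 := by
    intro i
    have := congrFun hgrad i
    simpa [Finset.sum_apply, Pi.single_apply, Matrix.mulVec, dotProduct] using this
  have hG : ∑ i, (y i - xs i) * (c i + 2 * η * (xs i - xc i) + (K i * Λ).trace
      + 2 * ∑ j, A i j * xs j) = 0 :=
    Finset.sum_eq_zero fun i _ => by rw [hg, mul_zero]
  generalize hl : (fun k => (K k * Λ).trace) = l at *
  have hl' : ∀ k, (K k * Λ).trace = l k := fun k => congrFun hl k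
  simp only [hl'] at *
  have hsw : ∑ i, ∑ j, xs i * (A i j * y j) = ∑ i, ∑ j, y i * (A i j * xs j) := by
    rw [Finset.sum_comm]
    refine Finset.sum_congr rfl fun i _ => Finset.sum_congr rfl fun j _ => ?_
    rw [hsymm j i]; ring
  have e1 : (Y - vecMulVec y y).trace = Y.trace - ∑ i, y i * y i := by
    simp [Matrix.trace, vecMulVec_apply]
  have e2 : ∑ i, ∑ j, (Y - vecMulVec y y) i j * A i j
      = ∑ i, ∑ j, Y i j * A i j - ∑ i, ∑ j, y i * (A i j * y j) := by
    simp only [← Finset.sum_sub_distrib]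
    refine Finset.sum_congr rfl fun i _ => Finset.sum_congr rfl fun j _ => ?_
    simp [vecMulVec_apply]; ring
  have e3 : vecNorm (y - xs) ^ 2
      = ∑ i, y i * y i - 2 * ∑ i, y i * xs i + ∑ i, xs i * xs i := by
    rw [vecNorm_sq, Finset.mul_sum, ← Finset.sum_sub_distrib, ← Finset.sum_add_distrib]
    refine Finset.sum_congr rfl fun i _ => ?_
    simp; ring
  have e4 : (y - xs) ⬝ᵥ (A *ᵥ (y - xs))
      = ∑ i, ∑ j, y i * (A i j * y j) - ∑ i, ∑ j, y i * (A i j * xs j)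
        - ∑ i, ∑ j, xs i * (A i j * y j) + ∑ i, ∑ j, xs i * (A i j * xs j) := by
    simp only [dotProduct, Matrix.mulVec, Finset.mul_sum, ← Finset.sum_sub_distrib,
      ← Finset.sum_add_distrib]
    refine Finset.sum_congr rfl fun i _ => Finset.sum_congr rfl fun j _ => ?_
    simp; ring
  have e5 : ∑ i, ∑ j, vecMulVec xs xs i j * A i j = ∑ i, ∑ j, xs i * (A i j * xs j) := by
    refine Finset.sum_congr rfl fun i _ => Finset.sum_congr rfl fun j _ => ?_
    simp [vecMulVec_apply]; ring
  have e6 : ∑ i, (y i - xs i) * (c i + 2 * η * (xs i - xc i) + l i + 2 * ∑ j, A i j * xs j)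
      = ∑ i, c i * y i - ∑ i, c i * xs i + 2 * η * ∑ i, y i * xs i - 2 * η * ∑ i, xs i * xs i
        - 2 * η * ∑ i, xc i * y i + 2 * η * ∑ i, xc i * xs i + ∑ i, y i * l i - ∑ i, xs i * l i
        + 2 * ∑ i, ∑ j, y i * (A i j * xs j) - 2 * ∑ i, ∑ j, xs i * (A i j * xs j) := by
    simp only [← Finset.mul_sum]
    have hw : ∃ w : Fin n → ℝ, ∀ i, ∑ j, A i j * xs j = w i := ⟨_, fun _ => rfl⟩
    obtain ⟨w, hw⟩ := hw
    simp only [hw]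
    simp only [Finset.mul_sum, ← Finset.sum_sub_distrib, ← Finset.sum_add_distrib]
    refine Finset.sum_congr rfl fun i _ => ?_
    ring
  have e7 : (vecMulVec xs xs).trace = ∑ i, xs i * xs i := by
    simp [Matrix.trace, vecMulVec_apply]
  rw [e6] at hG
  rw [e5] at hcs'
  simp only [relObj, e1, e2, e3, e4, e7]
  rw [hsw]
  simp only [dotProduct]
  linear_combination hG + hcs'

theorem bmi_lemma_eight {n m : ℕ} (hn : 0 < n) (hm : 0 < m)
    (F0 : Matrix (Fin m) (Fin m) ℝ)
    (K : Fin n → Matrix (Fin m) (Fin m) ℝ)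
    (L : Fin n → Fin n → Matrix (Fin m) (Fin m) ℝ)
    (hF0 : F0.IsSymm) (hK : ∀ k, (K k).IsSymm)
    (hL : ∀ i j, (L i j).IsSymm) (hLsy : ∀ i j, L i j = L j i)
    (c xc : Fin n → ℝ) (k : Fin 3)
    (hn2 : k = 1 → 2 ≤ n)
    (ζ : ℝ)
    (hζ : ζ = if k = 0 then 1 else if k = 1 then 1/((n : ℝ) - 1)
          else 1/Real.sqrt (n : ℝ))
    (C : Set (Matrix (Fin n) (Fin n) ℝ))
    (hC : C = if k = 0 then coneC1 n else if k = 1 then coneC2 n else coneC3 n)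
    (η : ℝ) (hη : 0 < η)
    (xs : Fin n → ℝ)
    (hopt : IsOptPen F0 K L c xc η xs)
    (Λ : Matrix (Fin m) (Fin m) ℝ)
    (hKKT : KKT F0 K L c xc η xs Λ)
    (hbound : pencilNorm L * Λ.trace < ζ * η) :
    IsOptRel F0 K L c xc η C xs (vecMulVec xs xs) ∧
    ∀ y Y, IsOptRel F0 K L c xc η C y Y → y = xs ∧ Y = vecMulVec xs xs := by
  have hΛ := hKKT.2.1
  have hsymm : ∀ i j, alphaMat L Λ i j = alphaMat L Λ j i := fun i j => by
    simp [alphaMat, hLsy i j]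
  have hA := vecNorm_alphaMat_mulVec_le L hΛ
  obtain ⟨hτ, hC3, h0, σ, hσ, hpair⟩ :=
    exists_pairing_bound hn hn2 hζ hC hη hA hsymm hbound
  -- Weak duality; both coefficients on the left are strictly positive.
  have hgap : ∀ y Y, RelFeasible F0 K L C y Y →
      (η - σ) * (Y - vecMulVec y y).trace
        + (η - pencilNorm L * Λ.trace) * vecNorm (y - xs) ^ 2
      ≤ relObj c xc η y Y - relObj c xc η xs (vecMulVec xs xs) := by
    rintro y Y ⟨-, hneg, hH⟩
    rw [relObj_gap hLsy hKKT y Y]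
    have h1 := hpair _ hH
    have h2 := quadForm_ge hA (y - xs)
    have h3 := trace_mul_nonneg hneg hΛ
    rw [Matrix.neg_mul, Matrix.trace_neg] at h3
    linarith
  have hfeas : RelFeasible F0 K L C xs (vecMulVec xs xs) := by
    refine ⟨?_, hopt.1, by simpa using h0⟩
    ext i j
    simp [vecMulVec_apply, mul_comm]
  refine ⟨⟨hfeas, fun y Y hY => ?_⟩, fun y Y hY => ?_⟩
  · have h1 := hgap y Y hY
    have h2 := mul_nonneg (sub_pos.2 hσ).le (trace_nonneg_of_coneC3 (hC3 hY.2.2))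
    have h3 := mul_nonneg (sub_pos.2 hτ).le (sq_nonneg (vecNorm (y - xs)))
    linarith
  · have h1 := hgap y Y hY.1
    have h2 := hY.2 _ _ hfeas
    have ht := trace_nonneg_of_coneC3 (hC3 hY.1.2.2)
    have h3 := mul_nonneg (sub_pos.2 hσ).le ht
    have h4 := mul_nonneg (sub_pos.2 hτ).le (sq_nonneg (vecNorm (y - xs)))
    have hv : vecNorm (y - xs) ^ 2 = 0 :=
      (mul_eq_zero.1 (by linarith :
        (η - pencilNorm L * Λ.trace) * vecNorm (y - xs) ^ 2 = 0)).resolve_left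
        (sub_pos.2 hτ).ne'
    have hH : (Y - vecMulVec y y).trace = 0 :=
      (mul_eq_zero.1 (by linarith : (η - σ) * (Y - vecMulVec y y).trace = 0)).resolve_left
        (sub_pos.2 hσ).ne'
    have hy : y = xs := sub_eq_zero.1 (vecNorm_eq_zero (pow_eq_zero_iff two_ne_zero |>.1 hv))
    have hYe := sub_eq_zero.1 (eq_zero_of_coneC3 (hC3 hY.1.2.2) hH.le)
    subst hy
    exact ⟨rfl, hYe⟩
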